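/- G(q²)G(q³) + qH(q²)H(q³) = χ(−q³)/χ(−q), where χ(q) = (−q;q²)_∞ and G, H are the Rogers–Ramanujan series. -/

import Mathlib

/-- Rogers–Ramanujan series `G` in product form: `G(q) = 1/((q;q⁵)_∞ (q⁴;q⁵)_∞)`. -/
noncomputable def RRG (q : ℂ) : ℂ :=
  1 / ((∏' k : ℕ, (1 - q ^ (5 * k + 1))) * ∏' k : ℕ, (1 - q ^ (5 * k + 4)))

/-- Rogers–Ramanujan series `H` in product form: `H(q) = 1/((q²;q⁵)_∞ (q³;q⁵)_∞)`. -/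
noncomputable def RRH (q : ℂ) : ℂ :=
  1 / ((∏' k : ℕ, (1 - q ^ (5 * k + 2))) * ∏' k : ℕ, (1 - q ^ (5 * k + 3)))

/-- `χ(q) = (−q;q²)_∞ = ∏_{n≥0}(1 + q^(2n+1))`. -/
noncomputable def rchi (q : ℂ) : ℂ := ∏' n : ℕ, (1 + q ^ (2 * n + 1))

/-!
Write `θ(z; q) = ∑_{n ∈ ℤ} (-z)^n q^(n(n-1)/2)`. By the Jacobi triple product, `θ(x²; x⁵)` and
`θ(x; x⁵)` are `(x; x)_∞ G(x)` and `(x; x)_∞ H(x)`. Multiplying out `θ(-1; q) θ(q³; q⁶)` and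
substituting `(m, n) = (2a + 3b + i, a - b)`, with `0 ≤ i < 5`, splits the quadratic form
`m² + 6n²` as `10a² + 15b²`, so the product becomes
`∑_i q^(i(i-1)/2) θ(q^(2(i+2)); q¹⁰) θ(q^(3(i+2)); q¹⁵)`. The terms `i = 0, 1` both give the
`G`-product, `i = 2, 4` both give the `H`-product, and `i = 3` vanishes. On the other side,
`θ(-1; q)` and `θ(q³; q⁶)` are themselves products, by Euler's `(-q; q)_∞ (q; q²)_∞ = 1`.
-/

open Filter Finset Topology

section Pochhammer

/-- The finite `q`-Pochhammer symbol `(a; q)_n = ∏_{k < n} (1 - a q^k)`. -/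
def qPochhammer {R : Type*} [CommRing R] (a q : R) (n : ℕ) : R := ∏ k ∈ range n, (1 - a * q ^ k)

/-- The infinite `q`-Pochhammer symbol `(a; q)_∞ = ∏_{k ≥ 0} (1 - a q^k)`. -/
noncomputable def qPochhammerInf {R : Type*} [CommRing R] [TopologicalSpace R] (a q : R) : R :=
  ∏' k : ℕ, (1 - a * q ^ k)

lemma qPochhammer_succ {R : Type*} [CommRing R] (a q : R) (n : ℕ) :
    qPochhammer a q (n + 1) = qPochhammer a q n * (1 - a * q ^ n) :=
  prod_range_succ _ _

variable {𝕜 : Type*} [NormedField 𝕜] {q : 𝕜}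

lemma norm_pow_lt_one (hq : ‖q‖ < 1) {n : ℕ} (hn : n ≠ 0) : ‖q ^ n‖ < 1 := by
  rw [norm_pow]
  exact pow_lt_one₀ (norm_nonneg q) hq hn

lemma not_isOfFinOrder_of_norm_lt_one (hq : ‖q‖ < 1) : ¬IsOfFinOrder q :=
  fun h ↦ hq.ne h.norm_eq_one

lemma summable_norm_neg_mul_pow (a : 𝕜) (hq : ‖q‖ < 1) :
    Summable fun k : ℕ ↦ ‖-(a * q ^ k)‖ := by
  simpa only [norm_neg, norm_mul, norm_pow] using
    (summable_geometric_of_lt_one (norm_nonneg q) hq).mul_left ‖a‖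

variable [CompleteSpace 𝕜]

lemma multipliable_one_sub_mul_pow (a : 𝕜) (hq : ‖q‖ < 1) :
    Multipliable fun k : ℕ ↦ 1 - a * q ^ k := by
  simpa only [sub_eq_add_neg] using
    multipliable_one_add_of_summable (summable_norm_neg_mul_pow a hq)

lemma tendsto_qPochhammer (a : 𝕜) (hq : ‖q‖ < 1) :
    Tendsto (qPochhammer a q) atTop (𝓝 (qPochhammerInf a q)) :=
  (multipliable_one_sub_mul_pow a hq).hasProd.tendsto_prod_nat

lemma qPochhammerInf_eq_zero_iff {a : 𝕜} (hq : ‖q‖ < 1) :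
    qPochhammerInf a q = 0 ↔ ∃ k : ℕ, a * q ^ k = 1 := by
  refine ⟨fun h ↦ ?_, fun ⟨k, hk⟩ ↦ tprod_of_exists_eq_zero ⟨k, by simp [hk]⟩⟩
  contrapose! h
  simpa only [sub_eq_add_neg, qPochhammerInf] using tprod_one_add_ne_zero_of_summable
    (fun k ↦ by simpa only [← sub_eq_add_neg] using sub_ne_zero.2 (h k).symm)
    (summable_norm_neg_mul_pow a hq)

lemma qPochhammerInf_pow_ne_zero (hq : ‖q‖ < 1) {m n : ℕ} (hm : m ≠ 0) (hn : n ≠ 0) :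
    qPochhammerInf (q ^ m) (q ^ n) ≠ 0 := by
  rw [Ne, qPochhammerInf_eq_zero_iff (norm_pow_lt_one hq hn)]
  rintro ⟨k, hk⟩
  rw [← pow_mul, ← pow_add] at hk
  exact not_isOfFinOrder_of_norm_lt_one hq
    (isOfFinOrder_iff_pow_eq_one.2 ⟨m + n * k, by positivity, hk⟩)

lemma qPochhammerInf_self_ne_zero (hq : ‖q‖ < 1) : qPochhammerInf q q ≠ 0 := by
  simpa only [pow_one] using qPochhammerInf_pow_ne_zero hq one_ne_zero one_ne_zero

lemma qPochhammerInf_eq_one_sub_mul (a : 𝕜) (hq : ‖q‖ < 1) :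
    qPochhammerInf a q = (1 - a) * qPochhammerInf (a * q) q := by
  have hshift (k : ℕ) : 1 - a * q ^ (k + 1) = 1 - a * q * q ^ k := by ring
  have hmul : Multipliable fun k ↦ 1 - a * q ^ (k + 1) := by
    simpa only [hshift] using multipliable_one_sub_mul_pow (a * q) hq
  rw [qPochhammerInf, tprod_eq_zero_mul' (f := fun k ↦ 1 - a * q ^ k) hmul, pow_zero, mul_one,
    tprod_congr hshift, qPochhammerInf]

lemma qPochhammerInf_mul_neg (a : 𝕜) (hq : ‖q‖ < 1) :
    qPochhammerInf a q * qPochhammerInf (-a) q = qPochhammerInf (a ^ 2) (q ^ 2) := by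
  rw [qPochhammerInf, qPochhammerInf, ← (multipliable_one_sub_mul_pow a hq).tprod_mul
    (multipliable_one_sub_mul_pow (-a) hq)]
  exact tprod_congr fun k ↦ by ring

lemma qPochhammerInf_eq_prod_pow (a : 𝕜) (hq : ‖q‖ < 1) (d : ℕ) [NeZero d] :
    qPochhammerInf a q = ∏ i ∈ range d, qPochhammerInf (a * q ^ i) (q ^ d) := by
  let e : Fin d × ℕ ≃ ℕ := (Equiv.prodComm _ _).trans (Nat.divModEquiv d).symm
  have factor (i : Fin d) (k : ℕ) : 1 - a * q ^ e (i, k) = 1 - a * q ^ (i : ℕ) * (q ^ d) ^ k := by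
    simp only [e, Equiv.trans_apply, Equiv.prodComm_apply, Prod.swap_prod_mk,
      Nat.divModEquiv_symm_apply]
    ring
  have hfiber (i : Fin d) : Multipliable fun k ↦ 1 - a * q ^ e (i, k) := by
    simpa only [factor] using multipliable_one_sub_mul_pow _ (norm_pow_lt_one hq (NeZero.ne d))
  rw [← Fin.prod_univ_eq_prod_range fun i ↦ qPochhammerInf (a * q ^ i) (q ^ d), qPochhammerInf,
    ← e.tprod_eq]
  refine ((e.multipliable_iff.2 (multipliable_one_sub_mul_pow a hq)).tprod_prod' hfiber).trans ?_
  rw [tprod_fintype]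
  exact prod_congr rfl fun i _ ↦ tprod_congr (factor i)

lemma qPochhammerInf_self_eq_mul_sq (hq : ‖q‖ < 1) :
    qPochhammerInf q q = qPochhammerInf q (q ^ 2) * qPochhammerInf (q ^ 2) (q ^ 2) := by
  simpa only [prod_range_succ, range_zero, prod_empty, one_mul, pow_zero, mul_one, pow_one, ← sq]
    using qPochhammerInf_eq_prod_pow q hq 2

lemma qPochhammerInf_self_eq_mul_five (hq : ‖q‖ < 1) :
    qPochhammerInf q q = qPochhammerInf q (q ^ 5) * qPochhammerInf (q ^ 2) (q ^ 5) *
      qPochhammerInf (q ^ 3) (q ^ 5) * qPochhammerInf (q ^ 4) (q ^ 5) *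
      qPochhammerInf (q ^ 5) (q ^ 5) := by
  simpa only [prod_range_succ, range_zero, prod_empty, one_mul, pow_zero, mul_one, ← pow_succ',
    Nat.reduceAdd, pow_one] using qPochhammerInf_eq_prod_pow q hq 5

/-- Euler: partitions into distinct parts are equinumerous with partitions into odd parts. -/
lemma qPochhammerInf_neg_mul_sq (hq : ‖q‖ < 1) :
    qPochhammerInf (-q) q * qPochhammerInf q (q ^ 2) = 1 := by
  apply mul_left_cancel₀ (qPochhammerInf_pow_ne_zero hq two_ne_zero two_ne_zero)
  linear_combination qPochhammerInf_mul_neg q hq -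
    qPochhammerInf (-q) q * qPochhammerInf_self_eq_mul_sq hq

end Pochhammer

section GaussianBinomial

variable {K : Type*} [Field K] {q : K}

/-- `1 / (q; q)_m` for an integer `m`, with the convention that it vanishes for `m < 0`. -/
def qPochhammerInv (q : K) (m : ℤ) : K := if 0 ≤ m then (qPochhammer q q m.toNat)⁻¹ else 0

/-- The Gaussian binomial coefficient `[m choose j]_q`, which vanishes for `j < 0` and `m < j`.
The lower index is an integer so that sums over it can be shifted freely. -/
def gaussBinom (q : K) (m : ℕ) (j : ℤ) : K :=
  qPochhammer q q m * qPochhammerInv q j * qPochhammerInv q (m - j)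

lemma qPochhammerInv_natCast (q : K) (n : ℕ) :
    qPochhammerInv q n = (qPochhammer q q n)⁻¹ := by
  simp [qPochhammerInv]

lemma qPochhammerInv_of_neg (q : K) {m : ℤ} (hm : m < 0) : qPochhammerInv q m = 0 :=
  if_neg hm.not_ge

lemma qPochhammerInv_sub_one (hq : ¬IsOfFinOrder q) (m : ℤ) :
    qPochhammerInv q (m - 1) = qPochhammerInv q m * (1 - q ^ m) := by
  obtain hm | rfl | hm := lt_trichotomy m 0
  · rw [qPochhammerInv_of_neg q hm, qPochhammerInv_of_neg q (by omega), zero_mul]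
  · simp [qPochhammerInv]
  · obtain ⟨n, rfl⟩ : ∃ n : ℕ, m = (n + 1 : ℕ) := ⟨(m - 1).toNat, by omega⟩
    have hne : 1 - q ^ (n + 1) ≠ 0 := fun h ↦
      hq (isOfFinOrder_iff_pow_eq_one.2 ⟨n + 1, n.succ_pos, (sub_eq_zero.1 h).symm⟩)
    rw [zpow_natCast, qPochhammerInv_natCast, Nat.cast_succ, add_sub_cancel_right,
      qPochhammerInv_natCast, qPochhammer_succ, ← pow_succ', mul_inv, inv_mul_cancel_right₀ hne]

lemma gaussBinom_zero (q : K) : gaussBinom q 0 = Pi.single 0 1 := by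
  ext j
  obtain hj | rfl | hj := lt_trichotomy j 0
  · simp [gaussBinom, qPochhammerInv_of_neg q hj, hj.ne]
  · simp [gaussBinom, qPochhammerInv, qPochhammer]
  · simp [gaussBinom, qPochhammerInv_of_neg q (neg_neg_of_pos hj), hj.ne']

lemma gaussBinom_succ (hq : ¬IsOfFinOrder q) (hq₀ : q ≠ 0) (m : ℕ) (j : ℤ) :
    gaussBinom q (m + 1) j = gaussBinom q m j + q ^ (m + 1 - j) * gaussBinom q m (j - 1) := by
  have hpow : q ^ (m + 1) = q ^ (m + 1 - j) * q ^ j := by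
    rw [← zpow_add₀ hq₀, sub_add_cancel]
    exact_mod_cast (zpow_natCast q (m + 1)).symm
  have hsub := qPochhammerInv_sub_one hq (m + 1 - j)
  rw [show (m + 1 - j - 1 : ℤ) = m - j by ring] at hsub
  rw [gaussBinom, gaussBinom, gaussBinom, qPochhammer_succ, ← pow_succ', hsub,
    qPochhammerInv_sub_one hq j, Nat.cast_succ, hpow, sub_sub_eq_add_sub]
  ring

lemma gaussBinom_sub (q : K) (m : ℕ) (j : ℤ) : gaussBinom q m (m - j) = gaussBinom q m j := by
  rw [gaussBinom, gaussBinom, sub_sub_cancel, mul_right_comm]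

end GaussianBinomial

section GaussianBinomialLimit

variable {𝕜 : Type*} [NormedField 𝕜] [CompleteSpace 𝕜] {q : 𝕜}

lemma tendsto_inv_qPochhammer (hq : ‖q‖ < 1) :
    Tendsto (fun n ↦ (qPochhammer q q n)⁻¹) atTop (𝓝 (qPochhammerInf q q)⁻¹) :=
  (tendsto_qPochhammer q hq).inv₀ (qPochhammerInf_self_ne_zero hq)

lemma tendsto_qPochhammerInv (hq : ‖q‖ < 1) :
    Tendsto (qPochhammerInv q) atTop (𝓝 (qPochhammerInf q q)⁻¹) := by
  have htoNat : Tendsto Int.toNat atTop atTop :=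
    tendsto_atTop.2 fun n ↦ (eventually_ge_atTop (n : ℤ)).mono fun m hm ↦ by omega
  refine ((tendsto_inv_qPochhammer hq).comp htoNat).congr' ?_
  filter_upwards [eventually_ge_atTop 0] with m hm using (if_pos hm).symm

lemma tendsto_gaussBinom (hq : ‖q‖ < 1) (n : ℤ) :
    Tendsto (fun N : ℕ ↦ gaussBinom q (N + N) (N + n)) atTop (𝓝 (qPochhammerInf q q)⁻¹) := by
  have hinv (c : ℤ) : Tendsto (fun N : ℕ ↦ qPochhammerInv q (N + c)) atTop
      (𝓝 (qPochhammerInf q q)⁻¹) :=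
    (tendsto_qPochhammerInv hq).comp
      (tendsto_atTop_add_const_right _ c tendsto_natCast_atTop_atTop)
  have hnum : Tendsto (fun N : ℕ ↦ qPochhammer q q (N + N)) atTop (𝓝 (qPochhammerInf q q)) :=
    (tendsto_qPochhammer q hq).comp (tendsto_id.atTop_add_atTop tendsto_id)
  convert (hnum.mul (hinv n)).mul (hinv (-n)) using 2 with N
  · rw [gaussBinom, Nat.cast_add, add_sub_add_left_eq_sub, sub_eq_add_neg]
  · rw [mul_inv_cancel₀ (qPochhammerInf_self_ne_zero hq), one_mul]

lemma exists_norm_gaussBinom_le (hq : ‖q‖ < 1) : ∃ C, ∀ m j, ‖gaussBinom q m j‖ ≤ C := by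
  obtain ⟨A, hA⟩ := (tendsto_qPochhammer q hq).norm.bddAbove_range
  obtain ⟨B, hB⟩ := (tendsto_inv_qPochhammer hq).norm.bddAbove_range
  replace hA (m : ℕ) : ‖qPochhammer q q m‖ ≤ A := hA ⟨m, rfl⟩
  replace hB (n : ℕ) : ‖(qPochhammer q q n)⁻¹‖ ≤ B := hB ⟨n, rfl⟩
  have hA₀ : 0 ≤ A := (norm_nonneg _).trans (hA 0)
  have hB₀ : 0 ≤ B := (norm_nonneg _).trans (hB 0)
  have hinv (j : ℤ) : ‖qPochhammerInv q j‖ ≤ B := by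
    unfold qPochhammerInv
    split_ifs
    · exact hB _
    · rwa [norm_zero]
  refine ⟨A * B * B, fun m j ↦ ?_⟩
  rw [gaussBinom, norm_mul, norm_mul]
  gcongr
  exacts [hA m, hinv _, hinv _]

end GaussianBinomialLimit

section Theta

/-- The binomial coefficient `n(n-1)/2` of an arbitrary integer `n`. -/
def chooseTwo (n : ℤ) : ℤ := n * (n - 1) / 2

lemma two_mul_chooseTwo (n : ℤ) : 2 * chooseTwo n = n * (n - 1) :=
  Int.two_mul_ediv_two_of_even (Int.even_mul_pred_self n)

lemma chooseTwo_add_one (n : ℤ) : chooseTwo (n + 1) = chooseTwo n + n := by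
  linarith [two_mul_chooseTwo n, two_mul_chooseTwo (n + 1)]

lemma chooseTwo_natCast (n : ℕ) : chooseTwo n = n.choose 2 := by
  induction n with
  | zero => rfl
  | succ n ih =>
    rw [Nat.cast_succ, chooseTwo_add_one, ih, Nat.choose_succ_succ', Nat.choose_one_right,
      Nat.cast_add, add_comm]

/-- The general term `(-z)^n q^(n(n-1)/2)` of the theta series. -/
def thetaTerm {K : Type*} [Field K] (z q : K) (n : ℤ) : K := (-z) ^ n * q ^ chooseTwo n

/-- The theta series `θ(z; q) = ∑_{n ∈ ℤ} (-z)^n q^(n(n-1)/2)`; in Ramanujan's notation this is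
`f(-z, -q/z)`. -/
noncomputable def theta {K : Type*} [Field K] [TopologicalSpace K] (z q : K) : K :=
  ∑' n, thetaTerm z q n

section Field

variable {K : Type*} [Field K] {q z : K}

lemma thetaTerm_zero (z q : K) : thetaTerm z q 0 = 1 := by simp [thetaTerm, chooseTwo]

lemma thetaTerm_ne_zero (hz : z ≠ 0) (hq : q ≠ 0) (n : ℤ) : thetaTerm z q n ≠ 0 :=
  mul_ne_zero (zpow_ne_zero _ (neg_ne_zero.2 hz)) (zpow_ne_zero _ hq)

lemma thetaTerm_add_one (hz : z ≠ 0) (hq : q ≠ 0) (n : ℤ) :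
    thetaTerm z q (n + 1) = thetaTerm z q n * (-z * q ^ n) := by
  rw [thetaTerm, thetaTerm, chooseTwo_add_one, zpow_add_one₀ (neg_ne_zero.2 hz), zpow_add₀ hq]
  ring

lemma thetaTerm_neg (hz : z ≠ 0) (hq : q ≠ 0) (n : ℤ) :
    thetaTerm z q (-n) = thetaTerm (q / z) q n := by
  have hexp : chooseTwo (-n) = n + chooseTwo n := by
    linarith [two_mul_chooseTwo n, two_mul_chooseTwo (-n)]
  rw [thetaTerm, thetaTerm, hexp, zpow_add₀ hq, zpow_neg, ← inv_zpow, ← mul_assoc, ← mul_zpow]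
  congr 2
  field_simp

lemma thetaTerm_neg_one (q : K) (n : ℕ) : thetaTerm (-1) q n = q ^ n.choose 2 := by
  rw [thetaTerm, neg_neg, one_zpow, one_mul, chooseTwo_natCast, zpow_natCast]

lemma thetaTerm_mul_self (hz : z ≠ 0) (hq : q ≠ 0) (n : ℤ) :
    thetaTerm (z * q) q n = -z⁻¹ * thetaTerm z q (n + 1) := by
  rw [thetaTerm_add_one hz hq, thetaTerm, thetaTerm, ← neg_mul, mul_zpow]
  field_simp

/-- The general term of the finite form of the Jacobi triple product. -/
def finiteThetaTerm (z q : K) (M N : ℕ) (n : ℤ) : K :=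
  gaussBinom q (M + N) (N + n) * thetaTerm z q n

lemma finiteThetaTerm_neg (hz : z ≠ 0) (hq : q ≠ 0) (M N : ℕ) (n : ℤ) :
    finiteThetaTerm z q M N (-n) = finiteThetaTerm (q / z) q N M n := by
  have hindex : (N + -n : ℤ) = (M + N : ℕ) - (M + n) := by push_cast; ring
  rw [finiteThetaTerm, finiteThetaTerm, thetaTerm_neg hz hq, hindex, gaussBinom_sub, add_comm M N]

lemma finiteThetaTerm_succ (hq : ¬IsOfFinOrder q) (hq₀ : q ≠ 0) (hz : z ≠ 0) (M N : ℕ) (n : ℤ) :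
    finiteThetaTerm z q (M + 1) N n =
      finiteThetaTerm z q M N n + -(z * q ^ M) * finiteThetaTerm z q M N (n - 1) := by
  have hpow : q ^ ((M + N : ℕ) + 1 - (N + n) : ℤ) * q ^ (n - 1) = q ^ M := by
    rw [← zpow_add₀ hq₀, ← zpow_natCast]
    congr 1
    push_cast
    ring
  have hterm : q ^ ((M + N : ℕ) + 1 - (N + n) : ℤ) * thetaTerm z q n =
      -(z * q ^ M) * thetaTerm z q (n - 1) := by
    rw [← sub_add_cancel n 1, thetaTerm_add_one hz hq₀, sub_add_cancel, ← hpow]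
    ring
  rw [finiteThetaTerm, finiteThetaTerm, finiteThetaTerm, Nat.add_right_comm,
    gaussBinom_succ hq hq₀, add_sub_assoc (N : ℤ) n 1]
  linear_combination gaussBinom q (M + N) (N + (n - 1)) * hterm

variable [TopologicalSpace K]

lemma hasSum_finiteThetaTerm_zero (z q : K) : HasSum (finiteThetaTerm z q 0 0) 1 := by
  convert hasSum_single (f := finiteThetaTerm z q 0 0) 0 fun n hn ↦ ?_ <;>
    simp [finiteThetaTerm, gaussBinom_zero, thetaTerm_zero, *]

variable [IsTopologicalRing K]

lemma hasSum_finiteThetaTerm_left (hq : ¬IsOfFinOrder q) (hq₀ : q ≠ 0) (hz : z ≠ 0) {N : ℕ}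
    {s : K} (h : HasSum (finiteThetaTerm z q 0 N) s) (M : ℕ) :
    HasSum (finiteThetaTerm z q M N) (qPochhammer z q M * s) := by
  induction M with
  | zero => simpa only [qPochhammer, range_zero, prod_empty, one_mul] using h
  | succ M ih =>
    have hshift : HasSum (fun n ↦ finiteThetaTerm z q M N (n - 1)) (qPochhammer z q M * s) :=
      (Equiv.subRight (1 : ℤ)).hasSum_iff (f := finiteThetaTerm z q M N) |>.2 ih
    convert ih.add (hshift.mul_left (-(z * q ^ M))) using 1
    · exact funext (finiteThetaTerm_succ hq hq₀ hz M N)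
    · rw [qPochhammer_succ]
      ring

/-- The finite form of the Jacobi triple product. -/
theorem hasSum_finiteThetaTerm (hq : ¬IsOfFinOrder q) (hq₀ : q ≠ 0) (hz : z ≠ 0) (M N : ℕ) :
    HasSum (finiteThetaTerm z q M N) (qPochhammer z q M * qPochhammer (q / z) q N) := by
  have hneg : HasSum (finiteThetaTerm (q / z) q N 0) (qPochhammer (q / z) q N) := by
    simpa only [mul_one] using hasSum_finiteThetaTerm_left hq hq₀ (div_ne_zero hq₀ hz)
      (hasSum_finiteThetaTerm_zero (q / z) q) N
  refine hasSum_finiteThetaTerm_left hq hq₀ hz ((Equiv.neg ℤ).hasSum_iff.1 ?_) M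
  exact hneg.congr_fun fun n ↦ finiteThetaTerm_neg hz hq₀ 0 N n

lemma theta_mul_self [T2Space K] (hz : z ≠ 0) (hq : q ≠ 0) :
    theta (z * q) q = -z⁻¹ * theta z q := by
  simp only [theta, thetaTerm_mul_self hz hq, tsum_mul_left]
  rw [← (Equiv.addRight (1 : ℤ)).tsum_eq (thetaTerm z q)]
  rfl

end Field

variable {𝕜 : Type*} [NormedField 𝕜] {q z : 𝕜}

lemma summable_norm_thetaTerm_natCast (hz : z ≠ 0) (hq₀ : q ≠ 0) (hq : ‖q‖ < 1) :
    Summable fun n : ℕ ↦ ‖thetaTerm z q n‖ := by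
  refine summable_of_ratio_test_tendsto_lt_one zero_lt_one
    (.of_forall fun n ↦ norm_ne_zero_iff.2 (thetaTerm_ne_zero hz hq₀ n)) ?_
  have hratio (n : ℕ) : ‖‖thetaTerm z q (n + 1 : ℕ)‖‖ / ‖‖thetaTerm z q n‖‖ = ‖z‖ * ‖q‖ ^ n := by
    rw [norm_norm, norm_norm, Nat.cast_succ, thetaTerm_add_one hz hq₀, norm_mul,
      mul_div_cancel_left₀ _ (norm_ne_zero_iff.2 (thetaTerm_ne_zero hz hq₀ n)), norm_mul, norm_neg,
      zpow_natCast, norm_pow]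
  simpa only [hratio, mul_zero] using
    (tendsto_pow_atTop_nhds_zero_of_lt_one (norm_nonneg q) hq).const_mul ‖z‖

lemma summable_norm_thetaTerm (hz : z ≠ 0) (hq₀ : q ≠ 0) (hq : ‖q‖ < 1) :
    Summable fun n ↦ ‖thetaTerm z q n‖ := by
  refine .of_nat_of_neg (summable_norm_thetaTerm_natCast hz hq₀ hq) ?_
  simpa only [thetaTerm_neg hz hq₀] using
    summable_norm_thetaTerm_natCast (div_ne_zero hq₀ hz) hq₀ hq

variable [CompleteSpace 𝕜]

/-- The Jacobi triple product. -/
theorem theta_eq_mul (hz : z ≠ 0) (hq₀ : q ≠ 0) (hq : ‖q‖ < 1) :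
    theta z q = qPochhammerInf q q * (qPochhammerInf z q * qPochhammerInf (q / z) q) := by
  obtain ⟨C, hC⟩ := exists_norm_gaussBinom_le hq
  have hseries : Tendsto (fun N ↦ ∑' n, finiteThetaTerm z q N N n) atTop
      (𝓝 (∑' n, (qPochhammerInf q q)⁻¹ * thetaTerm z q n)) := by
    refine tendsto_tsum_of_dominated_convergence ((summable_norm_thetaTerm hz hq₀ hq).mul_left C)
      (fun n ↦ (tendsto_gaussBinom hq n).mul_const _) (.of_forall fun N n ↦ ?_)
    rw [finiteThetaTerm, norm_mul]
    exact mul_le_mul_of_nonneg_right (hC _ _) (norm_nonneg _)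
  have hprod : Tendsto (fun N ↦ ∑' n, finiteThetaTerm z q N N n) atTop
      (𝓝 (qPochhammerInf z q * qPochhammerInf (q / z) q)) := by
    simpa only [(hasSum_finiteThetaTerm (not_isOfFinOrder_of_norm_lt_one hq) hq₀ hz _ _).tsum_eq]
      using (tendsto_qPochhammer z hq).mul (tendsto_qPochhammer (q / z) hq)
  rw [← tendsto_nhds_unique hseries hprod, tsum_mul_left, theta,
    mul_inv_cancel_left₀ (qPochhammerInf_self_ne_zero hq)]

lemma theta_pow_pow (hq₀ : q ≠ 0) (hq : ‖q‖ < 1) (j k : ℕ) (hjk : j + k ≠ 0) :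
    theta (q ^ j) (q ^ (j + k)) = qPochhammerInf (q ^ (j + k)) (q ^ (j + k)) *
      (qPochhammerInf (q ^ j) (q ^ (j + k)) * qPochhammerInf (q ^ k) (q ^ (j + k))) := by
  have hdiv : q ^ (j + k) / q ^ j = q ^ k := by
    rw [pow_add, mul_div_cancel_left₀ _ (pow_ne_zero j hq₀)]
  rw [theta_eq_mul (pow_ne_zero j hq₀) (pow_ne_zero _ hq₀) (norm_pow_lt_one hq hjk), hdiv]

lemma theta_self (hq₀ : q ≠ 0) (hq : ‖q‖ < 1) : theta q q = 0 := by
  have hzero : qPochhammerInf 1 q = 0 := (qPochhammerInf_eq_zero_iff hq).2 ⟨0, by simp⟩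
  rw [theta_eq_mul hq₀ hq₀ hq, div_self hq₀, hzero, mul_zero, mul_zero]

lemma theta_self_sq (hq₀ : q ≠ 0) (hq : ‖q‖ < 1) :
    theta q (q ^ 2) = qPochhammerInf q q * qPochhammerInf q (q ^ 2) := by
  have h := theta_pow_pow hq₀ hq 1 1 (by decide)
  rw [pow_one, one_add_one_eq_two] at h
  rw [h, qPochhammerInf_self_eq_mul_sq hq]
  ring

lemma theta_neg_one_mul_qPochhammerInf (hq₀ : q ≠ 0) (hq : ‖q‖ < 1) :
    theta (-1) q * qPochhammerInf q (q ^ 2) = 2 * qPochhammerInf (q ^ 2) (q ^ 2) := by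
  have hneg : qPochhammerInf (-1) q = 2 * qPochhammerInf (-q) q := by
    rw [qPochhammerInf_eq_one_sub_mul (-1) hq, neg_one_mul, sub_neg_eq_add, one_add_one_eq_two]
  rw [theta_eq_mul (neg_ne_zero.2 one_ne_zero) hq₀ hq, hneg, div_neg, div_one,
    ← qPochhammerInf_mul_neg q hq]
  linear_combination 2 * qPochhammerInf q q * qPochhammerInf (-q) q * qPochhammerInf_neg_mul_sq hq

end Theta

section Schroter

/-- The change of summation variables `(m, n) = (l a + k b + i, a - b)`, with `0 ≤ i < l + k`, that
diagonalises the quadratic form `m² + l k n²` into `l (l + k) a² + k (l + k) b²`. -/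
def schroterEquiv (l k : ℕ) [NeZero (l + k)] : Fin (l + k) × ℤ × ℤ ≃ ℤ × ℤ where
  toFun p := (l * p.2.1 + k * p.2.2 + p.1, p.2.1 - p.2.2)
  invFun r :=
    let p := Int.divModEquiv (l + k) (r.1 + k * r.2)
    (p.2, p.1, p.1 - r.2)
  left_inv := by
    rintro ⟨i, a, b⟩
    have hsum : l * a + k * b + i + k * (a - b) = (Int.divModEquiv (l + k)).symm (a, i) := by
      rw [Int.divModEquiv_symm_apply]
      push_cast
      ring
    simp only [hsum, Equiv.apply_symm_apply, sub_sub_cancel]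
  right_inv := by
    rintro ⟨m, n⟩
    have hsum := (Int.divModEquiv (l + k)).symm_apply_apply (m + k * n)
    rw [Int.divModEquiv_symm_apply] at hsum
    push_cast at hsum
    ext
    · simp only
      linear_combination hsum
    · simp only [sub_sub_cancel]

lemma chooseTwo_schroter (l k i a b : ℤ) :
    chooseTwo (l * a + k * b + i) + l * k * chooseTwo (a - b) =
      chooseTwo i + ((chooseTwo l + l * i) * a + l * (l + k) * chooseTwo a) +
        ((chooseTwo k + k * (l + i)) * b + k * (l + k) * chooseTwo b) := by
  apply mul_left_cancel₀ (two_ne_zero (α := ℤ))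
  linear_combination two_mul_chooseTwo (l * a + k * b + i) + l * k * two_mul_chooseTwo (a - b) -
    two_mul_chooseTwo i - a * two_mul_chooseTwo l - l * (l + k) * two_mul_chooseTwo a -
    b * two_mul_chooseTwo k - k * (l + k) * two_mul_chooseTwo b

lemma thetaTerm_mul_zpow {K : Type*} [Field K] {q : K} (hq : q ≠ 0) (w : K) (c d n : ℤ) :
    thetaTerm (w * q ^ c) (q ^ d) n = (-w) ^ n * q ^ (c * n + d * chooseTwo n) := by
  rw [thetaTerm, ← neg_mul, mul_zpow, ← zpow_mul, ← zpow_mul, mul_assoc, ← zpow_add₀ hq]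

lemma thetaTerm_mul_thetaTerm_schroter {K : Type*} [Field K] {q x y : K} (hq : q ≠ 0) (hx : x ≠ 0)
    (hy : y ≠ 0) (l k i : ℕ) (a b : ℤ) :
    thetaTerm x q (l * a + k * b + i) * thetaTerm y (q ^ (l * k)) (a - b) =
      thetaTerm x q i *
        (thetaTerm (thetaTerm x q l * y * q ^ (l * i)) (q ^ (l * (l + k))) a *
          thetaTerm (thetaTerm x q k * y⁻¹ * q ^ (k * (l + i))) (q ^ (k * (l + k))) b) := by
  have harg (w : K) (r s : ℕ) : thetaTerm x q r * w * q ^ s =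
      (-x) ^ r * w * q ^ (chooseTwo r + s) := by
    rw [thetaTerm, zpow_add₀ hq, zpow_natCast, zpow_natCast]
    ring
  have hx' : (-x) ^ (l * a + k * b + i) = (-x) ^ (i : ℤ) * (((-x) ^ l) ^ a * ((-x) ^ k) ^ b) := by
    rw [zpow_add₀ (neg_ne_zero.2 hx), zpow_add₀ (neg_ne_zero.2 hx), zpow_mul, zpow_mul,
      zpow_natCast (-x) l, zpow_natCast (-x) k, mul_comm]
  have hy' : (-y) ^ (a - b) = (-y) ^ a * (-y⁻¹) ^ b := by
    rw [zpow_sub₀ (neg_ne_zero.2 hy), div_eq_mul_inv, ← inv_zpow, inv_neg]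
  have hq' := congr_arg (q ^ · : ℤ → K) (chooseTwo_schroter l k i a b)
  simp only [zpow_add₀ hq] at hq'
  rw [harg, harg, ← zpow_natCast q (l * (l + k)), ← zpow_natCast q (k * (l + k)),
    ← zpow_natCast q (l * k), thetaTerm_mul_zpow hq, thetaTerm_mul_zpow hq, thetaTerm,
    thetaTerm, thetaTerm, ← zpow_mul q, hx', hy']
  push_cast
  rw [← mul_neg, ← mul_neg, mul_zpow, mul_zpow, zpow_add₀ hq, zpow_add₀ hq]
  linear_combination (-x) ^ (i : ℤ) * (((-x) ^ l) ^ a * ((-x) ^ k) ^ b) *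
    ((-y) ^ a * (-y⁻¹) ^ b) * hq'

/-- Schröter's formula. -/
theorem theta_mul_theta {𝕜 : Type*} [NormedField 𝕜] [CompleteSpace 𝕜] {q x y : 𝕜} (hq₀ : q ≠ 0)
    (hq : ‖q‖ < 1) (hx : x ≠ 0) (hy : y ≠ 0) {l k : ℕ} (hl : l ≠ 0) (hk : k ≠ 0) :
    theta x q * theta y (q ^ (l * k)) =
      ∑ i ∈ range (l + k), thetaTerm x q i *
        (theta (thetaTerm x q l * y * q ^ (l * i)) (q ^ (l * (l + k))) *
          theta (thetaTerm x q k * y⁻¹ * q ^ (k * (l + i))) (q ^ (k * (l + k)))) := by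
  have : NeZero (l + k) := ⟨by omega⟩
  have summable {z : 𝕜} (hz : z ≠ 0) {n : ℕ} (hn : n ≠ 0) :
      Summable fun j ↦ ‖thetaTerm z (q ^ n) j‖ :=
    summable_norm_thetaTerm hz (pow_ne_zero n hq₀) (norm_pow_lt_one hq hn)
  have hsx := summable_norm_thetaTerm hx hq₀ hq
  have hsy := summable hy (mul_ne_zero hl hk)
  rw [theta, theta, tsum_mul_tsum_of_summable_norm hsx hsy, ← (schroterEquiv l k).tsum_eq]
  refine ((schroterEquiv l k).summable_iff.2
    (summable_mul_of_summable_norm hsx hsy)).tsum_prod.trans ?_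
  rw [tsum_fintype, sum_range]
  refine sum_congr rfl fun i _ ↦ ?_
  have hsa := summable (mul_ne_zero (mul_ne_zero (thetaTerm_ne_zero hx hq₀ l) hy)
    (pow_ne_zero (l * i) hq₀)) (mul_ne_zero hl (NeZero.ne (l + k)))
  have hsb := summable (mul_ne_zero (mul_ne_zero (thetaTerm_ne_zero hx hq₀ k) (inv_ne_zero hy))
    (pow_ne_zero (k * (l + i)) hq₀)) (mul_ne_zero hk (NeZero.ne (l + k)))
  rw [theta, theta, tsum_mul_tsum_of_summable_norm hsa hsb, ← tsum_mul_left]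
  exact tsum_congr fun p ↦ thetaTerm_mul_thetaTerm_schroter hq₀ hx hy l k i p.1 p.2

lemma theta_neg_one_mul_theta_cube {𝕜 : Type*} [NormedField 𝕜] [CompleteSpace 𝕜] {q : 𝕜}
    (hq₀ : q ≠ 0) (hq : ‖q‖ < 1) :
    theta (-1) q * theta (q ^ 3) (q ^ 6) = ∑ i ∈ range 5, q ^ i.choose 2 *
      (theta ((q ^ 2) ^ (i + 2)) ((q ^ 2) ^ 5) * theta ((q ^ 3) ^ (i + 2)) ((q ^ 3) ^ 5)) := by
  have hleft (i : ℕ) : q ^ Nat.choose 2 2 * q ^ 3 * q ^ (2 * i) = (q ^ 2) ^ (i + 2) := by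
    rw [Nat.choose_self]
    ring
  have hright (i : ℕ) : q ^ Nat.choose 3 2 * (q ^ 3)⁻¹ * q ^ (3 * (2 + i)) = (q ^ 3) ^ (i + 2) := by
    rw [show Nat.choose 3 2 = 3 from rfl, mul_inv_cancel₀ (pow_ne_zero 3 hq₀)]
    ring
  simpa only [thetaTerm_neg_one, hleft, hright, ← pow_mul, Nat.reduceMul, Nat.reduceAdd] using
    theta_mul_theta hq₀ hq (neg_ne_zero.2 one_ne_zero) (pow_ne_zero 3 hq₀) two_ne_zero three_ne_zero

end Schroter

section RogersRamanujan

variable {q : ℂ}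

lemma rchi_neg (q : ℂ) : rchi (-q) = qPochhammerInf q (q ^ 2) :=
  tprod_congr fun n ↦ by rw [Odd.neg_pow ⟨n, rfl⟩, pow_succ', pow_mul, sub_eq_add_neg]

lemma RRG_eq (q : ℂ) :
    RRG q = (qPochhammerInf q (q ^ 5) * qPochhammerInf (q ^ 4) (q ^ 5))⁻¹ := by
  rw [RRG, one_div]
  congr 2 <;> exact tprod_congr fun k ↦ by ring

lemma RRH_eq (q : ℂ) :
    RRH q = (qPochhammerInf (q ^ 2) (q ^ 5) * qPochhammerInf (q ^ 3) (q ^ 5))⁻¹ := by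
  rw [RRH, one_div]
  congr 2 <;> exact tprod_congr fun k ↦ by ring

lemma qPochhammerInf_mul_RRG (hq : ‖q‖ < 1) :
    qPochhammerInf q q * RRG q = qPochhammerInf (q ^ 5) (q ^ 5) *
      (qPochhammerInf (q ^ 2) (q ^ 5) * qPochhammerInf (q ^ 3) (q ^ 5)) := by
  have hne₁ : qPochhammerInf q (q ^ 5) ≠ 0 := by
    simpa using qPochhammerInf_pow_ne_zero hq one_ne_zero (n := 5) (by decide)
  have hne₄ := qPochhammerInf_pow_ne_zero hq four_ne_zero (n := 5) (by decide)
  rw [RRG_eq, qPochhammerInf_self_eq_mul_five hq]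
  field_simp

lemma qPochhammerInf_mul_RRH (hq : ‖q‖ < 1) :
    qPochhammerInf q q * RRH q = qPochhammerInf (q ^ 5) (q ^ 5) *
      (qPochhammerInf q (q ^ 5) * qPochhammerInf (q ^ 4) (q ^ 5)) := by
  have hne₂ := qPochhammerInf_pow_ne_zero hq two_ne_zero (n := 5) (by decide)
  have hne₃ := qPochhammerInf_pow_ne_zero hq three_ne_zero (n := 5) (by decide)
  rw [RRH_eq, qPochhammerInf_self_eq_mul_five hq]
  field_simp

lemma theta_sq_five (hq₀ : q ≠ 0) (hq : ‖q‖ < 1) :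
    theta (q ^ 2) (q ^ 5) = qPochhammerInf q q * RRG q := by
  rw [qPochhammerInf_mul_RRG hq, theta_pow_pow hq₀ hq 2 3 (by decide)]

lemma theta_cube_five (hq₀ : q ≠ 0) (hq : ‖q‖ < 1) :
    theta (q ^ 3) (q ^ 5) = qPochhammerInf q q * RRG q := by
  rw [qPochhammerInf_mul_RRG hq, theta_pow_pow hq₀ hq 3 2 (by decide),
    mul_comm (qPochhammerInf (q ^ 2) (q ^ 5))]

lemma theta_four_five (hq₀ : q ≠ 0) (hq : ‖q‖ < 1) :
    theta (q ^ 4) (q ^ 5) = qPochhammerInf q q * RRH q := by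
  rw [qPochhammerInf_mul_RRH hq, theta_pow_pow hq₀ hq 4 1 (by decide),
    mul_comm (qPochhammerInf q (q ^ 5)), pow_one]

lemma theta_six_five (hq₀ : q ≠ 0) (hq : ‖q‖ < 1) :
    theta (q ^ 6) (q ^ 5) = -q⁻¹ * (qPochhammerInf q q * RRH q) := by
  have hone := theta_pow_pow hq₀ hq 1 4 (by decide)
  rw [pow_one] at hone
  rw [pow_succ' q 5, theta_mul_self hq₀ (pow_ne_zero 5 hq₀), hone, qPochhammerInf_mul_RRH hq]

lemma theta_neg_one_mul_theta_cube_eq_RRG_RRH (hq₀ : q ≠ 0) (hq : ‖q‖ < 1) :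
    theta (-1) q * theta (q ^ 3) (q ^ 6) =
      2 * (qPochhammerInf (q ^ 2) (q ^ 2) * qPochhammerInf (q ^ 3) (q ^ 3)) *
        (RRG (q ^ 2) * RRG (q ^ 3) + q * RRH (q ^ 2) * RRH (q ^ 3)) := by
  have hq2 := norm_pow_lt_one hq two_ne_zero
  have hq3 := norm_pow_lt_one hq three_ne_zero
  have hq2₀ := pow_ne_zero 2 hq₀
  have hq3₀ := pow_ne_zero 3 hq₀
  rw [theta_neg_one_mul_theta_cube hq₀ hq]
  simp only [sum_range_succ, range_zero, sum_empty, zero_add, Nat.reduceAdd,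
    theta_sq_five hq2₀ hq2, theta_sq_five hq3₀ hq3,
    theta_cube_five hq2₀ hq2, theta_cube_five hq3₀ hq3,
    theta_four_five hq2₀ hq2, theta_four_five hq3₀ hq3,
    theta_six_five hq2₀ hq2, theta_six_five hq3₀ hq3,
    theta_self (pow_ne_zero 5 hq2₀) (norm_pow_lt_one hq2 (by decide : 5 ≠ 0)), Nat.choose]
  field_simp
  ring

end RogersRamanujan

/-- `G(q²)G(q³) + q H(q²)H(q³) = χ(−q³)/χ(−q)`. -/
theorem rr_forty_3_7 (q : ℂ) (hq : ‖q‖ < 1) :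
    RRG (q ^ 2) * RRG (q ^ 3) + q * RRH (q ^ 2) * RRH (q ^ 3) =
      rchi (-q ^ 3) / rchi (-q) := by
  obtain rfl | hq₀ := eq_or_ne q 0
  · simp [RRG, RRH, rchi]
  have hq2 := norm_pow_lt_one hq two_ne_zero
  have hq3 := norm_pow_lt_one hq three_ne_zero
  have hE : 2 * (qPochhammerInf (q ^ 2) (q ^ 2) * qPochhammerInf (q ^ 3) (q ^ 3)) ≠ 0 :=
    mul_ne_zero two_ne_zero
      (mul_ne_zero (qPochhammerInf_self_ne_zero hq2) (qPochhammerInf_self_ne_zero hq3))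
  have hχ : qPochhammerInf q (q ^ 2) ≠ 0 := by
    simpa only [pow_one] using qPochhammerInf_pow_ne_zero hq one_ne_zero two_ne_zero
  have hcube : theta (q ^ 3) (q ^ 6) =
      qPochhammerInf (q ^ 3) (q ^ 3) * qPochhammerInf (q ^ 3) ((q ^ 3) ^ 2) := by
    rw [← theta_self_sq (pow_ne_zero 3 hq₀) hq3, ← pow_mul]
  rw [rchi_neg, rchi_neg, eq_div_iff hχ]
  apply mul_left_cancel₀ hE
  rw [← mul_assoc, ← theta_neg_one_mul_theta_cube_eq_RRG_RRH hq₀ hq, hcube]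
  linear_combination qPochhammerInf (q ^ 3) (q ^ 3) * qPochhammerInf (q ^ 3) ((q ^ 3) ^ 2) *
    theta_neg_one_mul_qPochhammerInf hq₀ hq
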